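/- Let 𝐫 = ((r_1,s_1),…,(r_v,s_v)) and 𝐭 = ((t_1,u_1),…,(t_w,u_w)) be vectors of pairs of integers with all s_i, u_j ≠ 0, such that (Q_{𝐫,𝐭}(q; n))_{n≥0} is a well-defined sequence. Let N_1 := {i : s_i < 0}, N_2 := {j : u_j < 0}, and s := ∑_{i∈N_1} s_i − ∑_{j∈N_2} u_j, and assume s ≥ 0. Then the following are equivalent: (i) the sequence (Q_{𝐫,𝐭}(q; n))_{n≥0} is q-integral; (ii) for all but finitely many positive integers b, the function Δ_b^{𝐫,𝐭} is non-negative on ℝ_{≥0}. -/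

import Mathlib

open Polynomial
open scoped Classical

noncomputable section

/-- The generalized Dwork map `D_b(α)`: the unique rational whose reduced denominator is
coprime to `b` and such that `b·D_b(α) − α ∈ {0, 1, …, b−1}`. -/
def dwork (b : ℕ) (α : ℚ) : ℚ :=
  if h : ∃ θ : ℚ, Nat.Coprime θ.den b ∧ ∃ k : ℤ, 0 ≤ k ∧ k < (b : ℤ) ∧ (b : ℚ) * θ - α = (k : ℚ)
  then h.choose else 0

/-- `α ∈ ℤ_{≤0}`. -/
def IsNonPosInt (α : ℚ) : Prop := ∃ m : ℤ, m ≤ 0 ∧ α = (m : ℚ)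

/-- `α ∈ ℤ_{>0}`. -/
def IsPosInt (α : ℚ) : Prop := ∃ m : ℤ, 0 < m ∧ α = (m : ℚ)

/-- `𝔫_α`. -/
def frakn (α : ℚ) : ℤ := if 0 ≤ α then α.num else |α.num| + 1

/-- `⟨x⟩`: the fractional part of `x` if `x ∉ ℤ`, and `1` if `x ∈ ℤ`. -/
def cangle (x : ℝ) : ℝ := if ∃ m : ℤ, x = (m : ℝ) then 1 else Int.fract x

/-- Christol order `x ⪯ y`. -/
def cle (x y : ℝ) : Prop := cangle x < cangle y ∨ (cangle x = cangle y ∧ y ≤ x)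

/-- The step function `δ_b(r, s, ·)`. -/
def qdelta (b : ℕ) (r s : ℤ) (x : ℝ) : ℤ :=
  if Int.gcd (s / (Nat.gcd (Int.gcd r s) b : ℤ)) (((b / Nat.gcd (Int.gcd r s) b : ℕ)) : ℤ) = 1 then
    ⌊(Nat.gcd (Int.gcd r s) b : ℝ) * x
        - ((dwork (b / Nat.gcd (Int.gcd r s) b) ((r : ℚ) / (s : ℚ)) : ℚ) : ℝ)
        - ((⌊1 - (r : ℚ) / (s : ℚ)⌋ : ℤ) : ℝ) / ((b / Nat.gcd (Int.gcd r s) b : ℕ) : ℝ)⌋ + 1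
  else 0

/-- The Landau-type step function `Δ_b^{𝐫,𝐭}`. -/
def qDeltaFn {v w : ℕ} (b : ℕ) (rr : Fin v → ℤ × ℤ) (tt : Fin w → ℤ × ℤ) (x : ℝ) : ℤ :=
  (∑ i, qdelta b (rr i).1 (rr i).2 x) - (∑ j, qdelta b (tt j).1 (tt j).2 x)

/-- The q-Pochhammer symbol `(q^r; q^s)_n` for `n ∈ ℕ`, inside `ℚ(q)`. -/
def qPoch (r s : ℤ) (n : ℕ) : RatFunc ℚ :=
  ∏ i ∈ Finset.range n, (1 - RatFunc.X ^ (r + s * (i : ℤ)))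

/-- The q-Pochhammer symbol `(q^r; q^s)_n` for `n ∈ ℤ`. -/
def qPochZ (r s : ℤ) (n : ℤ) : RatFunc ℚ :=
  if 0 ≤ n then qPoch r s n.toNat else (qPoch (r - s) (-s) (-n).toNat)⁻¹

/-- Multiplicity of `p` in `g`: the largest `k` with `p^k ∣ g`. -/
def polyMult (p g : Polynomial ℚ) : ℕ := sSup {k : ℕ | p ^ k ∣ g}

/-- The valuation `v_{φ_b}` on `ℚ(q)` attached to the `b`-th cyclotomic polynomial. -/
def cycVal (b : ℕ) (f : RatFunc ℚ) : ℤ :=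
  (polyMult (cyclotomic b ℚ) f.num : ℤ) - (polyMult (cyclotomic b ℚ) f.denom : ℤ)

/-- The image of an integer polynomial in `ℚ(q)`. -/
def polyZ (g : Polynomial ℤ) : RatFunc ℚ :=
  algebraMap (Polynomial ℚ) (RatFunc ℚ) (g.map (Int.castRingHom ℚ))

/-- `f ∈ ℤ[q⁻¹, q]`. -/
def IsIntLaurent (f : RatFunc ℚ) : Prop :=
  ∃ (m : ℕ) (g : Polynomial ℤ), f * RatFunc.X ^ m = polyZ g

/-- `f ∈ ℤ[q]`. -/
def IsIntPoly (f : RatFunc ℚ) : Prop := ∃ g : Polynomial ℤ, f = polyZ g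

/-- The ratio attached to a pair of integers. -/
def ratOf (p : ℤ × ℤ) : ℚ := (p.1 : ℚ) / (p.2 : ℚ)

/-- The q-hypergeometric term `Q_{𝐫,𝐭}(q; n)`, `n ∈ ℕ`. -/
def qHyp {v w : ℕ} (rr : Fin v → ℤ × ℤ) (tt : Fin w → ℤ × ℤ) (n : ℕ) : RatFunc ℚ :=
  (∏ i, qPoch (rr i).1 (rr i).2 n) / (∏ j, qPoch (tt j).1 (tt j).2 n)

/-- The q-hypergeometric term `Q_{𝐫,𝐭}(q; n)`, `n ∈ ℤ`. -/
def qHypZ {v w : ℕ} (rr : Fin v → ℤ × ℤ) (tt : Fin w → ℤ × ℤ) (n : ℤ) : RatFunc ℚ :=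
  (∏ i, qPochZ (rr i).1 (rr i).2 n) / (∏ j, qPochZ (tt j).1 (tt j).2 n)

/-- `c := gcd(r, s, b)`. -/
def cOf (p : ℤ × ℤ) (b : ℕ) : ℕ := Nat.gcd (Int.gcd p.1 p.2) b

/-- Membership in `V_b` (resp. `W_b`): `gcd(s, b) = gcd(r, s, b)`. -/
def inV (p : ℤ × ℤ) (b : ℕ) : Prop := Nat.gcd p.2.natAbs b = cOf p b

/-- `d_{𝐫,𝐭}`: the lcm of all the `s_i` and `u_j`. -/
def dRT {v w : ℕ} (rr : Fin v → ℤ × ℤ) (tt : Fin w → ℤ × ℤ) : ℕ :=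
  Nat.lcm (Finset.univ.lcm fun i => ((rr i).2).natAbs)
    (Finset.univ.lcm fun j => ((tt j).2).natAbs)

/-- `b̃`: the greatest divisor of `b` coprime to `d`. -/
def btilde (d b : ℕ) : ℕ := Nat.findGreatest (fun k => k ∣ b ∧ Nat.Coprime k d) b

/-- The unique `a ∈ {1,…,d}` with `a·b̃ ≡ 1 (mod d)`. -/
def aOf (d b : ℕ) : ℕ :=
  if h : ∃ a, 1 ≤ a ∧ a ≤ d ∧ (a * btilde d b) % d = 1 % d then h.choose else 1

/-- The representative of `b` modulo `d` lying in `{1,…,d}`. -/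
def repMod (d b : ℕ) : ℕ := if b % d = 0 then d else b % d

/-- The jump abscissa `(⟨e·α⟩ + k)/c − ⌊1 − a·α⌋`. -/
def jumpPt (p : ℤ × ℤ) (b : ℕ) (a ei : ℤ) (k : ℕ) : ℝ :=
  (cangle (((ei : ℚ) * ratOf p : ℚ) : ℝ) + (k : ℝ)) / (cOf p b : ℝ)
    - ((⌊1 - (a : ℚ) * ratOf p⌋ : ℤ) : ℝ)

/-- Number of pairs `(i,k)` with jump abscissa `⪯ x` coming from one pair `p`. -/
def XiCount (p : ℤ × ℤ) (b : ℕ) (a ei : ℤ) (x : ℝ) : ℕ :=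
  if inV p b then ((Finset.range (cOf p b)).filter fun k => cle (jumpPt p b a ei k) x).card else 0

/-- The generalized Christol step function `Ξ_{𝐫,𝐭}(b, ·)`, relative to choices `e`, `f`. -/
def Xi {v w : ℕ} (rr : Fin v → ℤ × ℤ) (tt : Fin w → ℤ × ℤ) (b : ℕ)
    (e : Fin v → ℤ) (f : Fin w → ℤ) (x : ℝ) : ℤ :=
  (∑ i, (XiCount (rr i) b ((aOf (dRT rr tt) b : ℕ) : ℤ) (e i) x : ℤ))
    - (∑ j, (XiCount (tt j) b ((aOf (dRT rr tt) b : ℕ) : ℤ) (f j) x : ℤ))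

/-- `ei` is an admissible choice for the pair `p` and `b`: positive with `b·ei ≡ c (mod s)`. -/
def goodChoice (p : ℤ × ℤ) (b : ℕ) (ei : ℤ) : Prop :=
  inV p b → 0 < ei ∧ p.2 ∣ ((b : ℤ) * ei - (cOf p b : ℤ))

end

/-- The number of `i < n` such that `b` divides `r + s * i`, for `p = (r, s)`. -/
def dvdCount (b : ℕ) (p : ℤ × ℤ) (n : ℕ) : ℕ :=
  Nat.count (fun i : ℕ => (b : ℤ) ∣ p.1 + p.2 * i) n

theorem dvdCount_succ_of_not_dvd {b : ℕ} {p : ℤ × ℤ} {n : ℕ} (h : ¬ (b : ℤ) ∣ p.1 + p.2 * n) :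
    dvdCount b p (n + 1) = dvdCount b p n := by
  simp [dvdCount, Nat.count_succ, h]

theorem dvdCount_le (b : ℕ) (p : ℤ × ℤ) (n : ℕ) : dvdCount b p n ≤ n :=
  Nat.count_le _

theorem dvdCount_eq_sum (b : ℕ) (p : ℤ × ℤ) (n : ℕ) :
    (dvdCount b p n : ℤ) = ∑ i ∈ Finset.range n, if (b : ℤ) ∣ p.1 + p.2 * i then 1 else 0 := by
  rw [dvdCount, Nat.count_eq_card_filter_range, Finset.natCast_card_filter]

theorem ediv_eq_sub_one_ediv_add {b : ℤ} (hb : 0 < b) (m : ℤ) :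
    m / b = (m - 1) / b + if b ∣ m then 1 else 0 := by
  split_ifs with h
  · obtain ⟨c, rfl⟩ := h
    have h1 : b * c - 1 = (b - 1) + b * (c - 1) := by ring
    rw [Int.mul_ediv_cancel_left _ hb.ne', h1, Int.add_mul_ediv_left _ _ hb.ne',
      Int.ediv_eq_zero_of_lt (by omega) (by omega)]
    ring
  · have h0 : m % b ≠ 0 := fun h0 => h (Int.dvd_of_emod_eq_zero h0)
    have h1 := Int.emod_nonneg m hb.ne'
    have h2 := Int.emod_lt_of_pos m hb
    have h3 : m - 1 = (m % b - 1) + b * (m / b) := by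
      have := Int.emod_add_mul_ediv m b
      linarith
    have h4 : (m % b - 1) / b = 0 := by
      generalize m % b = t at h0 h1 h2
      exact Int.ediv_eq_zero_of_lt (by omega) (by omega)
    rw [h3, Int.add_mul_ediv_left _ _ hb.ne', h4]
    ring

theorem dvdCount_eq_ediv {b : ℕ} {p : ℤ × ℤ} {b' : ℕ} {k : ℤ} (hk : 0 ≤ k) (hkb : k < b')
    (h : ∀ i : ℕ, (b : ℤ) ∣ p.1 + p.2 * i ↔ (b' : ℤ) ∣ i - k) (n : ℕ) :
    (dvdCount b p n : ℤ) = ((n : ℤ) - 1 - k) / b' + 1 := by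
  have hb : (0 : ℤ) < b' := by omega
  induction n with
  | zero =>
    have h1 : ((0 : ℕ) : ℤ) - 1 - k = (b' - 1 - k) + b' * (-1) := by push_cast; ring
    rw [h1, Int.add_mul_ediv_left _ _ hb.ne', Int.ediv_eq_zero_of_lt (by omega) (by omega)]
    simp [dvdCount]
  | succ n ih =>
    have h1 : (((n + 1 : ℕ) : ℤ) - 1 - k) = n - k := by push_cast; ring
    have h2 : ((n : ℤ) - k - 1) = n - 1 - k := by ring
    rw [h1, ediv_eq_sub_one_ediv_add hb, h2]
    simp only [dvdCount, Nat.count_succ, h] at ih ⊢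
    push_cast
    rw [ih]
    ring

theorem exists_dwork_eq {b : ℕ} (hb : 0 < b) {r s : ℤ} (hs : s ≠ 0) (hsb : IsCoprime s (b : ℤ)) :
    ∃ k : ℤ, 0 ≤ k ∧ k < b ∧ (b : ℤ) ∣ r + s * k ∧
      (b : ℚ) * dwork b ((r : ℚ) / s) = (r : ℚ) / s + k := by
  have hsQ : (s : ℚ) ≠ 0 := by exact_mod_cast hs
  have hbQ : (b : ℚ) ≠ 0 := by exact_mod_cast hb.ne'
  have hbZ : (0 : ℤ) < b := by exact_mod_cast hb
  have hex : ∃ θ : ℚ, Nat.Coprime θ.den b ∧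
      ∃ k : ℤ, 0 ≤ k ∧ k < (b : ℤ) ∧ (b : ℚ) * θ - (r : ℚ) / s = (k : ℚ) := by
    obtain ⟨x, y, hxy⟩ := hsb
    have hdvd : (b : ℤ) ∣ r + s * ((-r * x) % b) := by
      have h1 : (-r * x) % (b : ℤ) = -r * x - b * ((-r * x) / b) := by
        have := Int.emod_add_mul_ediv (-r * x) b
        linarith
      refine ⟨r * y - s * ((-r * x) / b), ?_⟩
      rw [h1]
      linear_combination (-r) * hxy
    obtain ⟨m, hm⟩ := hdvd
    refine ⟨(m : ℚ) / s, ?_, (-r * x) % b, Int.emod_nonneg _ hbZ.ne', Int.emod_lt_of_pos _ hbZ, ?_⟩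
    · have h1 : (((m : ℚ) / s).den : ℤ) ∣ s := by
        rw [← Rat.divInt_eq_div]
        exact Rat.den_dvd m s
      have h2 : IsCoprime (((m : ℚ) / s).den : ℤ) (b : ℤ) :=
        IsCoprime.of_isCoprime_of_dvd_left ⟨x, y, hxy⟩ h1
      exact Nat.isCoprime_iff_coprime.mp h2
    · have hmQ : (r : ℚ) + s * (((-r * x) % b : ℤ) : ℚ) = b * m := by exact_mod_cast hm
      field_simp
      linarith
  have hdw : dwork b ((r : ℚ) / s) = hex.choose := by
    rw [dwork, dif_pos hex]
  obtain ⟨hcop, k, hk0, hkb, hk⟩ := hex.choose_spec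
  rw [← hdw] at hcop hk
  generalize dwork b ((r : ℚ) / s) = θ at hcop hk ⊢
  refine ⟨k, hk0, hkb, ?_, by linarith⟩
  have hnd : (θ.num : ℚ) = θ * θ.den := (Rat.mul_den_eq_num θ).symm
  have h1 : (b : ℤ) * (s * θ.num) = (r + s * k) * θ.den := by
    have : (b : ℚ) * (s * θ.num) = (r + s * k) * θ.den := by
      rw [hnd, ← hk]
      field_simp
      ring
    exact_mod_cast this
  have h2 : IsCoprime (b : ℤ) (θ.den : ℤ) := Nat.isCoprime_iff_coprime.mpr hcop.symm
  exact h2.dvd_of_dvd_mul_right ⟨_, h1.symm⟩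

/-- For `x ≥ 0`, the value `δ_b(r, s, x)` counts multiples of `b` among the `r + s * i`. -/
theorem qdelta_eq_dvdCount {b : ℕ} (hb : 0 < b) (p : ℤ × ℤ) (hs : p.2 ≠ 0) {x : ℝ} (hx : 0 ≤ x) :
    qdelta b p.1 p.2 x = dvdCount b p ⌊(b : ℝ) * x + (Int.fract (1 - ratOf p) : ℚ)⌋₊ := by
  obtain ⟨r, s⟩ := p
  simp only [ratOf] at hs ⊢
  set c := Nat.gcd (Int.gcd r s) b with hc
  have hcpos : 0 < c := Nat.gcd_pos_of_pos_right _ hb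
  have hcZ : (c : ℤ) ≠ 0 := by exact_mod_cast hcpos.ne'
  obtain ⟨b', hb'⟩ : c ∣ b := Nat.gcd_dvd_right _ _
  have hcg : (c : ℤ) ∣ Int.gcd r s := Int.natCast_dvd_natCast.mpr (Nat.gcd_dvd_left _ _)
  obtain ⟨r', hr'⟩ : (c : ℤ) ∣ r := hcg.trans (Int.gcd_dvd_left _ _)
  obtain ⟨s', hs'⟩ : (c : ℤ) ∣ s := hcg.trans (Int.gcd_dvd_right _ _)
  have hbdiv : b / c = b' := by rw [hb', Nat.mul_div_cancel_left _ hcpos]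
  have hsdiv : s / (c : ℤ) = s' := by rw [hs', Int.mul_ediv_cancel_left _ hcZ]
  have hb'pos : 0 < b' := Nat.pos_of_ne_zero (by rintro rfl; simp at hb'; omega)
  have hs'0 : s' ≠ 0 := by rintro rfl; simp at hs'; exact hs hs'
  have hiff (i : ℤ) : (b : ℤ) ∣ r + s * i ↔ (b' : ℤ) ∣ r' + s' * i := by
    rw [hb', hr', hs']
    push_cast
    rw [show (c : ℤ) * r' + c * s' * i = c * (r' + s' * i) by ring]
    exact mul_dvd_mul_iff_left hcZ
  simp only [qdelta, ← hc, hbdiv, hsdiv]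
  split_ifs with hg
  · have hcop : IsCoprime s' (b' : ℤ) := Int.isCoprime_iff_gcd_eq_one.mpr hg
    obtain ⟨k, hk0, hkb, hdvd, hdw⟩ := exists_dwork_eq (r := r') hb'pos hs'0 hcop
    have hrat : (r' : ℚ) / s' = (r : ℚ) / s := by
      rw [hr', hs']
      push_cast
      rw [mul_div_mul_left _ _ (by exact_mod_cast hcZ)]
    rw [hrat] at hdw
    have hmod (i : ℕ) : (b : ℤ) ∣ r + s * i ↔ (b' : ℤ) ∣ i - k := by
      rw [hiff]
      constructor
      · intro h
        refine hcop.symm.dvd_of_dvd_mul_left (y := s') ?_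
        have := dvd_sub h hdvd
        rwa [show r' + s' * i - (r' + s' * k) = s' * (i - k) by ring] at this
      · intro h
        have := dvd_add (h.mul_left s') hdvd
        rwa [show s' * (i - k) + (r' + s' * k) = r' + s' * i by ring] at this
    rw [dvdCount_eq_ediv (p := (r, s)) hk0 hkb hmod]
    have hb'R : (b' : ℝ) ≠ 0 := by exact_mod_cast hb'pos.ne'
    have hdwR : (b' : ℝ) * (dwork b' ((r : ℚ) / s) : ℚ) = (((r : ℚ) / s : ℚ) : ℝ) + k := by
      exact_mod_cast congrArg (fun q : ℚ => (q : ℝ)) hdw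
    have hfr : ((Int.fract (1 - (r : ℚ) / s) : ℚ) : ℝ)
        = 1 - (((r : ℚ) / s : ℚ) : ℝ) - ((⌊1 - (r : ℚ) / s⌋ : ℤ) : ℝ) := by
      rw [Int.fract]
      push_cast
      ring
    have hfr0 : (0 : ℝ) ≤ ((Int.fract (1 - (r : ℚ) / s) : ℚ) : ℝ) := by
      exact_mod_cast Int.fract_nonneg _
    have hbR : (b : ℝ) = c * b' := by exact_mod_cast hb'
    have hfl : ((⌊(b : ℝ) * x + (Int.fract (1 - (r : ℚ) / s) : ℚ)⌋₊ : ℕ) : ℤ)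
        = ⌊(b : ℝ) * x + (Int.fract (1 - (r : ℚ) / s) : ℚ)⌋ :=
      Int.natCast_floor_eq_floor (by positivity)
    rw [hfl]
    congr 1
    have key : (c : ℝ) * x - (dwork b' ((r : ℚ) / s) : ℚ) - ((⌊1 - (r : ℚ) / s⌋ : ℤ) : ℝ) / b'
        = ((b : ℝ) * x + (Int.fract (1 - (r : ℚ) / s) : ℚ) - ((1 + k : ℤ) : ℝ)) / b' := by
      rw [hfr, hbR, eq_div_iff hb'R, sub_mul, sub_mul, div_mul_cancel₀ _ hb'R]
      push_cast at hdwR ⊢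
      linear_combination -hdwR
    rw [key, Int.floor_div_natCast, Int.floor_sub_intCast]
    congr 1
    ring
  · have hno (i : ℕ) : ¬ (b : ℤ) ∣ r + s * i := by
      rw [hiff]
      intro h
      apply hg
      set g := Int.gcd s' (b' : ℤ) with hgdef
      have h1 : (g : ℤ) ∣ s' := Int.gcd_dvd_left _ _
      have h2 : (g : ℤ) ∣ b' := Int.gcd_dvd_right _ _
      have h3 : (g : ℤ) ∣ r' := (Int.dvd_add_left (h1.mul_right _)).mp (h2.trans h)
      have h4 : c * g ∣ c := by
        rw [hc]
        refine Nat.dvd_gcd ?_ ?_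
        · rw [← hc]
          refine Int.natCast_dvd_natCast.mp (Int.dvd_coe_gcd ?_ ?_)
          · rw [hr']; push_cast; exact mul_dvd_mul_left _ h3
          · rw [hs']; push_cast; exact mul_dvd_mul_left _ h1
        · rw [← hc]
          rw [hb']
          exact mul_dvd_mul_left _ (Int.natCast_dvd_natCast.mp h2)
      have h5 : c * g ∣ c * 1 := by simpa using h4
      exact Nat.dvd_one.mp ((Nat.mul_dvd_mul_iff_left hcpos).mp h5)
    simp [dvdCount, Nat.count_eq_card_filter_range, hno]

/-- For `b` large, the floors appearing in `qdelta_eq_dvdCount` can be replaced by a single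
integer that does not depend on the pair. -/
theorem exists_uniform_dvdCount {ι : Type*} [Finite ι] (P : ι → ℤ × ℤ) (hP : ∀ i, (P i).2 ≠ 0) :
    ∃ N : ℕ, ∀ b : ℕ, N ≤ b → ∀ y : ℝ, 0 ≤ y → ∃ n : ℕ, ∀ i,
      dvdCount b (P i) ⌊y + (Int.fract (1 - ratOf (P i)) : ℚ)⌋₊ = dvdCount b (P i) n := by
  obtain ⟨M, hM⟩ := (Set.finite_range fun ij : ι × ι =>
    ((P ij.1).2 * (P ij.2).1 - (P ij.2).2 * (P ij.1).1).natAbs).bddAbove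
  refine ⟨M + 1, fun b hb y hy => ?_⟩
  set m := ⌊y⌋₊ with hm
  have hcase (i : ι) : ⌊y + (Int.fract (1 - ratOf (P i)) : ℚ)⌋₊ = m ∨
      ⌊y + (Int.fract (1 - ratOf (P i)) : ℚ)⌋₊ = m + 1 := by
    have h0 : (0 : ℝ) ≤ ((Int.fract (1 - ratOf (P i)) : ℚ) : ℝ) := by
      exact_mod_cast Int.fract_nonneg _
    have h1 : ((Int.fract (1 - ratOf (P i)) : ℚ) : ℝ) < 1 := by
      exact_mod_cast Int.fract_lt_one _
    have h2 : m ≤ ⌊y + (Int.fract (1 - ratOf (P i)) : ℚ)⌋₊ := Nat.floor_mono (by linarith)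
    have h3 : ⌊y + (Int.fract (1 - ratOf (P i)) : ℚ)⌋₊ ≤ m + 1 := by
      rw [hm, ← Nat.floor_add_one hy]
      exact Nat.floor_mono (by linarith)
    omega
  have hstay {i : ι} (hi : ¬ (b : ℤ) ∣ (P i).1 + (P i).2 * m) {k : ℕ} (hk : k = m ∨ k = m + 1) :
      dvdCount b (P i) k = dvdCount b (P i) m := by
    rcases hk with rfl | rfl
    · rfl
    · exact dvdCount_succ_of_not_dvd hi
  by_cases hex : ∃ j, (b : ℤ) ∣ (P j).1 + (P j).2 * m
  · obtain ⟨j, hj⟩ := hex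
    refine ⟨⌊y + (Int.fract (1 - ratOf (P j)) : ℚ)⌋₊, fun i => ?_⟩
    by_cases hi : (b : ℤ) ∣ (P i).1 + (P i).2 * m
    · have hdvd : (b : ℤ) ∣ (P i).2 * (P j).1 - (P j).2 * (P i).1 := by
        have := dvd_sub (hj.mul_left (P i).2) (hi.mul_left (P j).2)
        rwa [show (P i).2 * ((P j).1 + (P j).2 * m) - (P j).2 * ((P i).1 + (P i).2 * m)
          = (P i).2 * (P j).1 - (P j).2 * (P i).1 by ring] at this
      have hlt : ((P i).2 * (P j).1 - (P j).2 * (P i).1).natAbs < b :=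
        lt_of_le_of_lt (hM ⟨(i, j), rfl⟩) hb
      have h0 : (P i).2 * (P j).1 - (P j).2 * (P i).1 = 0 :=
        Int.eq_zero_of_abs_lt_dvd hdvd (by rw [Int.abs_eq_natAbs]; exact_mod_cast hlt)
      have hrat : ratOf (P i) = ratOf (P j) := by
        have hi' : ((P i).2 : ℚ) ≠ 0 := by exact_mod_cast hP i
        have hj' : ((P j).2 : ℚ) ≠ 0 := by exact_mod_cast hP j
        have h0' : ((P i).2 : ℚ) * (P j).1 - (P j).2 * (P i).1 = 0 := by exact_mod_cast h0
        rw [ratOf, ratOf, div_eq_div_iff hi' hj']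
        linarith
      rw [hrat]
    · rw [hstay hi (hcase i), hstay hi (hcase j)]
  · push Not at hex
    exact ⟨m, fun i => hstay (hex i) (hcase i)⟩

/-- The ring homomorphism underlying `polyZ`. -/
noncomputable def polyZHom : ℤ[X] →+* RatFunc ℚ :=
  (algebraMap ℚ[X] (RatFunc ℚ)).comp (mapRingHom (Int.castRingHom ℚ))

theorem polyZHom_apply (g : ℤ[X]) : polyZHom g = polyZ g := rfl

theorem polyZHom_injective : Function.Injective polyZHom :=
  (RatFunc.algebraMap_injective ℚ).comp (map_injective _ Int.cast_injective)

theorem polyZHom_X : polyZHom X = RatFunc.X := by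
  simp [polyZHom]

theorem polyZHom_cyclotomic_ne_zero (d : ℕ) : polyZHom (cyclotomic d ℤ) ≠ 0 :=
  (map_ne_zero_iff _ polyZHom_injective).mpr (cyclotomic_ne_zero d ℤ)

/-- `f` is, up to sign, `q ^ e` times the product over `1 ≤ d ≤ B` of the `d`-th cyclotomic
polynomials raised to the powers `v d`. -/
def HasCyclotomicForm (B : ℕ) (f : RatFunc ℚ) (e : ℤ) (v : ℕ → ℤ) : Prop :=
  ∃ ε : ℤˣ, f = polyZHom (C (ε : ℤ)) * RatFunc.X ^ e *
    ∏ d ∈ Finset.Icc 1 B, polyZHom (cyclotomic d ℤ) ^ v d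

namespace HasCyclotomicForm

variable {B : ℕ} {f g : RatFunc ℚ} {e e' : ℤ} {v v' : ℕ → ℤ}

theorem one : HasCyclotomicForm B 1 0 0 := ⟨1, by simp⟩

theorem mul (hf : HasCyclotomicForm B f e v) (hg : HasCyclotomicForm B g e' v') :
    HasCyclotomicForm B (f * g) (e + e') (v + v') := by
  obtain ⟨ε, rfl⟩ := hf
  obtain ⟨ε', rfl⟩ := hg
  refine ⟨ε * ε', ?_⟩
  have hX : (RatFunc.X : RatFunc ℚ) ≠ 0 := RatFunc.X_ne_zero
  simp only [Pi.add_apply, zpow_add₀ (polyZHom_cyclotomic_ne_zero _), zpow_add₀ hX,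
    Finset.prod_mul_distrib, Units.val_mul, map_mul]
  ring

theorem inv (hf : HasCyclotomicForm B f e v) : HasCyclotomicForm B f⁻¹ (-e) (-v) := by
  obtain ⟨ε, rfl⟩ := hf
  refine ⟨ε, ?_⟩
  simp only [Pi.neg_apply, zpow_neg, mul_inv, Finset.prod_inv_distrib]
  congr 2
  rcases Int.units_eq_one_or ε with rfl | rfl <;> simp

theorem div (hf : HasCyclotomicForm B f e v) (hg : HasCyclotomicForm B g e' v') :
    HasCyclotomicForm B (f / g) (e - e') (v - v') := by
  simpa only [div_eq_mul_inv, sub_eq_add_neg] using hf.mul hg.inv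

theorem prod {ι : Type*} {s : Finset ι} {f : ι → RatFunc ℚ} {e : ι → ℤ} {v : ι → ℕ → ℤ}
    (h : ∀ i ∈ s, HasCyclotomicForm B (f i) (e i) (v i)) :
    HasCyclotomicForm B (∏ i ∈ s, f i) (∑ i ∈ s, e i) (∑ i ∈ s, v i) := by
  induction s using Finset.cons_induction with
  | empty => simpa using one
  | cons a s ha ih =>
    simp only [Finset.prod_cons, Finset.sum_cons]
    exact (h a (by simp)).mul (ih fun i hi => h i (by simp [hi]))

theorem pow (hf : HasCyclotomicForm B f e v) (n : ℕ) :
    HasCyclotomicForm B (f ^ n) (n * e) (n • v) := by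
  simpa using prod (s := Finset.range n) (fun _ _ => hf)

/-- A power of `q` times a product of cyclotomic polynomials is an integral polynomial. -/
theorem isIntPoly (hf : HasCyclotomicForm B f e v) (he : 0 ≤ e)
    (hv : ∀ d ∈ Finset.Icc 1 B, 0 ≤ v d) : IsIntPoly f := by
  obtain ⟨ε, rfl⟩ := hf
  refine ⟨C (ε : ℤ) * X ^ e.toNat * ∏ d ∈ Finset.Icc 1 B, cyclotomic d ℤ ^ (v d).toNat, ?_⟩
  rw [← polyZHom_apply, map_mul, map_mul, map_pow, map_prod, polyZHom_X, ← zpow_natCast,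
    Int.toNat_of_nonneg he]
  congr 1
  refine Finset.prod_congr rfl fun d hd => ?_
  rw [map_pow, ← zpow_natCast, Int.toNat_of_nonneg (hv d hd)]

/-- If `g * f` is an integral polynomial and `g` does not vanish at a primitive `b`-th root of
unity, then the exponent of the `b`-th cyclotomic polynomial in `f` is nonnegative. -/
theorem nonneg_of_isIntPoly (hf : HasCyclotomicForm B f e v) {b : ℕ} (hb : b ∈ Finset.Icc 1 B)
    {ζ : ℂ} (hζ : IsPrimitiveRoot ζ b) {g : ℤ[X]} (hg : aeval ζ g ≠ 0)
    (h : IsIntPoly (polyZ g * f)) : 0 ≤ v b := by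
  by_contra! hneg
  obtain ⟨ε, rfl⟩ := hf
  obtain ⟨k, hk⟩ := h
  have hX : (RatFunc.X : RatFunc ℚ) ≠ 0 := RatFunc.X_ne_zero
  have hpoly : g * C (ε : ℤ) * X ^ e.toNat *
        ∏ d ∈ Finset.Icc 1 B, cyclotomic d ℤ ^ (v d).toNat =
      k * X ^ (-e).toNat * ∏ d ∈ Finset.Icc 1 B, cyclotomic d ℤ ^ (-v d).toNat := by
    apply polyZHom_injective
    simp only [map_mul, map_pow, map_prod, polyZHom_X]
    rw [polyZHom_apply k, ← hk, ← polyZHom_apply g]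
    have h1 : (RatFunc.X : RatFunc ℚ) ^ e.toNat = RatFunc.X ^ e * RatFunc.X ^ (-e).toNat := by
      rw [← zpow_natCast, ← zpow_natCast, ← zpow_add₀ hX]
      congr 1
      omega
    have h2 : ∏ d ∈ Finset.Icc 1 B, polyZHom (cyclotomic d ℤ) ^ (v d).toNat =
        (∏ d ∈ Finset.Icc 1 B, polyZHom (cyclotomic d ℤ) ^ v d) *
          ∏ d ∈ Finset.Icc 1 B, polyZHom (cyclotomic d ℤ) ^ (-v d).toNat := by
      rw [← Finset.prod_mul_distrib]
      refine Finset.prod_congr rfl fun d _ => ?_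
      rw [← zpow_natCast, ← zpow_natCast, ← zpow_add₀ (polyZHom_cyclotomic_ne_zero d)]
      congr 1
      omega
    rw [h1, h2]
    ring
  have hroot (d : ℕ) (hd : d ∈ Finset.Icc 1 B) : aeval ζ (cyclotomic d ℤ) = 0 ↔ d = b := by
    have hd0 : NeZero (d : ℂ) := ⟨by
      have := (Finset.mem_Icc.mp hd).1
      exact_mod_cast (by omega : d ≠ 0)⟩
    rw [aeval_def, eval₂_eq_eval_map, map_cyclotomic, ← IsRoot.def, isRoot_cyclotomic_iff]
    exact ⟨fun h => h.unique hζ, fun h => h ▸ hζ⟩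
  have heval := congrArg (aeval ζ) hpoly
  simp only [map_mul, map_pow, map_prod, aeval_X] at heval
  have hR : ∏ d ∈ Finset.Icc 1 B, aeval ζ (cyclotomic d ℤ) ^ (-v d).toNat = 0 := by
    refine Finset.prod_eq_zero hb ?_
    rw [(hroot b hb).mpr rfl, zero_pow (by omega)]
  have hζ0 : ζ ≠ 0 := hζ.ne_zero (by have := (Finset.mem_Icc.mp hb).1; omega)
  have hε : aeval ζ (C (ε : ℤ)) ≠ 0 := by
    rcases Int.units_eq_one_or ε with rfl | rfl <;> simp
  rw [hR, mul_zero] at heval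
  refine mul_ne_zero (mul_ne_zero (mul_ne_zero hg hε) (pow_ne_zero _ hζ0)) ?_ heval
  refine Finset.prod_ne_zero_iff.mpr fun d hd => ?_
  by_cases hdb : d = b
  · subst hdb
    rw [show (v d).toNat = 0 by omega, pow_zero]
    exact one_ne_zero
  · exact pow_ne_zero _ fun h => hdb ((hroot d hd).mp h)

end HasCyclotomicForm

theorem hasCyclotomicForm_one_sub_X_zpow {B : ℕ} {m : ℤ} (hm : m ≠ 0) (hB : m.natAbs ≤ B) :
    HasCyclotomicForm B (1 - RatFunc.X ^ m) (min m 0) (fun d => if (d : ℤ) ∣ m then 1 else 0) := by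
  have hprod : ∏ d ∈ Finset.Icc 1 B, polyZHom (cyclotomic d ℤ) ^ (if (d : ℤ) ∣ m then 1 else 0 : ℤ)
      = RatFunc.X ^ m.natAbs - 1 := by
    have h1 : polyZHom (X ^ m.natAbs - 1) = RatFunc.X ^ m.natAbs - 1 := by
      rw [map_sub, map_pow, polyZHom_X, map_one]
    rw [← h1, ← prod_cyclotomic_eq_X_pow_sub_one (Int.natAbs_pos.mpr hm) ℤ, map_prod]
    symm
    refine Finset.prod_subset_one_on_sdiff (fun d hd => ?_) (fun d hd => ?_) (fun d hd => ?_)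
    · have := Nat.pos_of_mem_divisors hd
      have := Nat.divisor_le hd
      exact Finset.mem_Icc.mpr ⟨by omega, by omega⟩
    · have hd' := (Finset.mem_sdiff.mp hd).2
      rw [if_neg, zpow_zero]
      intro h
      exact hd' (Nat.mem_divisors.mpr ⟨Int.natCast_dvd.mp h, by omega⟩)
    · rw [if_pos (Int.natCast_dvd.mpr (Nat.dvd_of_mem_divisors hd)), zpow_one]
  have hX : (RatFunc.X : RatFunc ℚ) ≠ 0 := RatFunc.X_ne_zero
  rcases lt_or_gt_of_ne hm with h | h
  · refine ⟨1, ?_⟩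
    rw [hprod, min_eq_left h.le, ← zpow_natCast, show (m.natAbs : ℤ) = -m by omega]
    simp only [Units.val_one, map_one, one_mul]
    rw [mul_sub, ← zpow_add₀ hX]
    simp
  · refine ⟨-1, ?_⟩
    rw [hprod, min_eq_right h.le, ← zpow_natCast, show (m.natAbs : ℤ) = m by omega]
    simp

theorem add_mul_ne_zero_of_not_isNonPosInt {p : ℤ × ℤ} (hs : p.2 ≠ 0)
    (hp : ¬ IsNonPosInt (ratOf p)) (i : ℕ) : p.1 + p.2 * i ≠ 0 := by
  intro h
  refine hp ⟨-i, by omega, ?_⟩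
  have hs' : (p.2 : ℚ) ≠ 0 := by exact_mod_cast hs
  have h' : (p.1 : ℚ) + p.2 * i = 0 := by exact_mod_cast h
  rw [ratOf, div_eq_iff hs']
  push_cast
  linarith

theorem hasCyclotomicForm_qPoch {p : ℤ × ℤ} (hs : p.2 ≠ 0) (hp : ¬ IsNonPosInt (ratOf p)) {n B : ℕ}
    (hB : p.1.natAbs + p.2.natAbs * n ≤ B) :
    HasCyclotomicForm B (qPoch p.1 p.2 n) (∑ i ∈ Finset.range n, min (p.1 + p.2 * i) 0)
      (fun d => dvdCount d p n) := by
  have hv : (fun d => (dvdCount d p n : ℤ)) = ∑ i ∈ Finset.range n,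
      fun d : ℕ => if (d : ℤ) ∣ p.1 + p.2 * i then (1 : ℤ) else 0 := by
    ext d
    rw [dvdCount_eq_sum, Finset.sum_apply]
  rw [hv]
  refine HasCyclotomicForm.prod fun i hi => ?_
  refine hasCyclotomicForm_one_sub_X_zpow (add_mul_ne_zero_of_not_isNonPosInt hs hp i) ?_
  have h1 : (p.2 * (i : ℤ)).natAbs = p.2.natAbs * i := by rw [Int.natAbs_mul, Int.natAbs_natCast]
  have h2 : p.2.natAbs * i ≤ p.2.natAbs * n :=
    Nat.mul_le_mul_left _ (Finset.mem_range.mp hi).le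
  have := Int.natAbs_add_le p.1 (p.2 * i)
  omega

/-- The exponent of the `b`-th cyclotomic polynomial in `Q_{𝐫,𝐭}(q; n)`. -/
def cycExponent {v w : ℕ} (rr : Fin v → ℤ × ℤ) (tt : Fin w → ℤ × ℤ) (n b : ℕ) : ℤ :=
  ∑ i, (dvdCount b (rr i) n : ℤ) - ∑ j, (dvdCount b (tt j) n : ℤ)

/-- The exponent of `q` in `Q_{𝐫,𝐭}(q; n)`. -/
def qExponent {v w : ℕ} (rr : Fin v → ℤ × ℤ) (tt : Fin w → ℤ × ℤ) (n : ℕ) : ℤ :=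
  ∑ i, ∑ m ∈ Finset.range n, min ((rr i).1 + (rr i).2 * (m : ℤ)) 0 -
    ∑ j, ∑ m ∈ Finset.range n, min ((tt j).1 + (tt j).2 * (m : ℤ)) 0

theorem exists_hasCyclotomicForm_qHyp {v w : ℕ} {rr : Fin v → ℤ × ℤ} {tt : Fin w → ℤ × ℤ}
    (hs : ∀ i, (rr i).2 ≠ 0) (hu : ∀ j, (tt j).2 ≠ 0)
    (ht : ∀ j, ¬ IsNonPosInt (ratOf (tt j))) (hr : ∀ i, ¬ IsNonPosInt (ratOf (rr i))) (n N : ℕ) :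
    ∃ B, N ≤ B ∧
      HasCyclotomicForm B (qHyp rr tt n) (qExponent rr tt n) (cycExponent rr tt n) := by
  let size (p : ℤ × ℤ) : ℕ := p.1.natAbs + p.2.natAbs * n
  refine ⟨N + ∑ i, size (rr i) + ∑ j, size (tt j), by omega, ?_⟩
  have hv : cycExponent rr tt n = (∑ i, fun b => (dvdCount b (rr i) n : ℤ)) -
      ∑ j, fun b => (dvdCount b (tt j) n : ℤ) := by
    ext b
    simp [cycExponent]
  rw [hv]
  refine (HasCyclotomicForm.prod fun i _ => hasCyclotomicForm_qPoch (hs i) (hr i) ?_).div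
    (HasCyclotomicForm.prod fun j _ => hasCyclotomicForm_qPoch (hu j) (ht j) ?_)
  · have := Finset.single_le_sum (f := fun i => size (rr i)) (fun _ _ => Nat.zero_le _)
      (Finset.mem_univ i)
    change size (rr i) ≤ _
    omega
  · have := Finset.single_le_sum (f := fun j => size (tt j)) (fun _ _ => Nat.zero_le _)
      (Finset.mem_univ j)
    change size (tt j) ≤ _
    omega

theorem neg_le_cycExponent {v w : ℕ} (rr : Fin v → ℤ × ℤ) (tt : Fin w → ℤ × ℤ) (n b : ℕ) :
    -(n * w : ℤ) ≤ cycExponent rr tt n b := by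
  have h1 : (0 : ℤ) ≤ ∑ i, (dvdCount b (rr i) n : ℤ) := Finset.sum_nonneg fun _ _ => by positivity
  have h2 : ∑ j, (dvdCount b (tt j) n : ℤ) ≤ ∑ _j : Fin w, (n : ℤ) :=
    Finset.sum_le_sum fun j _ => by exact_mod_cast dvdCount_le b (tt j) n
  rw [Finset.sum_const, Finset.card_univ, Fintype.card_fin, nsmul_eq_mul] at h2
  rw [cycExponent]
  linarith

theorem abs_min_add_mul_sub_le (r s : ℤ) (m : ℕ) :
    |min (r + s * m) 0 - min s 0 * m| ≤ |r| := by
  have h1 : min s 0 * (m : ℤ) = min (s * m) 0 := by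
    rw [min_mul_of_nonneg _ _ (by positivity), zero_mul]
  rw [h1, abs_le]
  have h2 := neg_abs_le r
  have h3 := le_abs_self r
  constructor <;> omega

theorem exists_neg_mul_le_qExponent {v w : ℕ} (rr : Fin v → ℤ × ℤ) (tt : Fin w → ℤ × ℤ)
    (hsum : 0 ≤ (∑ i ∈ Finset.univ.filter (fun i => (rr i).2 < 0), (rr i).2) -
        (∑ j ∈ Finset.univ.filter (fun j => (tt j).2 < 0), (tt j).2)) :
    ∃ M : ℕ, ∀ n : ℕ, -(n * M : ℤ) ≤ qExponent rr tt n := by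
  have hmin {ι : Type} [Fintype ι] (P : ι → ℤ × ℤ) :
      ∑ i ∈ Finset.univ.filter (fun i => (P i).2 < 0), (P i).2 = ∑ i, min (P i).2 0 := by
    rw [Finset.sum_filter]
    refine Finset.sum_congr rfl fun i _ => ?_
    split_ifs <;> omega
  rw [hmin, hmin] at hsum
  have hM0 : 0 ≤ ∑ i, |(rr i).1| + ∑ j, |(tt j).1| :=
    add_nonneg (Finset.sum_nonneg fun _ _ => abs_nonneg _)
      (Finset.sum_nonneg fun _ _ => abs_nonneg _)
  refine ⟨(∑ i, |(rr i).1| + ∑ j, |(tt j).1|).toNat, fun n => ?_⟩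
  rw [Int.toNat_of_nonneg hM0, qExponent, Finset.sum_comm,
    Finset.sum_comm (s := (Finset.univ : Finset (Fin w))), ← Finset.sum_sub_distrib]
  have hterm (m : ℕ) : -(∑ i, |(rr i).1| + ∑ j, |(tt j).1|) ≤
      ∑ i, min ((rr i).1 + (rr i).2 * (m : ℤ)) 0 - ∑ j, min ((tt j).1 + (tt j).2 * (m : ℤ)) 0 := by
    have h1 : ∑ i, (min (rr i).2 0 * (m : ℤ) - |(rr i).1|) ≤
        ∑ i, min ((rr i).1 + (rr i).2 * (m : ℤ)) 0 := Finset.sum_le_sum fun i _ => by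
      have := (abs_le.mp (abs_min_add_mul_sub_le (rr i).1 (rr i).2 m)).1
      linarith
    have h2 : ∑ j, min ((tt j).1 + (tt j).2 * (m : ℤ)) 0 ≤
        ∑ j, (min (tt j).2 0 * (m : ℤ) + |(tt j).1|) := Finset.sum_le_sum fun j _ => by
      have := (abs_le.mp (abs_min_add_mul_sub_le (tt j).1 (tt j).2 m)).2
      linarith
    rw [Finset.sum_sub_distrib, ← Finset.sum_mul] at h1
    rw [Finset.sum_add_distrib, ← Finset.sum_mul] at h2
    have h3 := mul_nonneg hsum (Int.natCast_nonneg m)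
    rw [sub_mul] at h3
    linarith
  have := Finset.sum_le_sum fun m (_ : m ∈ Finset.range n) => hterm m
  rw [Finset.sum_const, Finset.card_range, nsmul_eq_mul] at this
  linarith

/-- For `b` large, `Δ_b` is nonnegative on `ℝ_{≥0}` if and only if the exponents of the `b`-th
cyclotomic polynomial in the terms `Q_{𝐫,𝐭}(q; n)` are all nonnegative. -/
theorem exists_qDeltaFn_nonneg_iff {v w : ℕ} (rr : Fin v → ℤ × ℤ) (tt : Fin w → ℤ × ℤ)
    (hs : ∀ i, (rr i).2 ≠ 0) (hu : ∀ j, (tt j).2 ≠ 0) :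
    ∃ N : ℕ, ∀ b : ℕ, N ≤ b →
      ((∀ x : ℝ, 0 ≤ x → 0 ≤ qDeltaFn b rr tt x) ↔ ∀ n, 0 ≤ cycExponent rr tt n b) := by
  obtain ⟨N, hN⟩ := exists_uniform_dvdCount (Sum.elim rr tt) (by rintro (i | j); exacts [hs i, hu j])
  refine ⟨N + 1, fun b hb => ?_⟩
  have hb0 : 0 < b := by omega
  have hbR : (0 : ℝ) < b := by exact_mod_cast hb0
  constructor
  · intro h n
    have hx : (0 : ℝ) ≤ n / b := by positivity
    have hfl (p : ℤ × ℤ) : ⌊(b : ℝ) * (n / b) + (Int.fract (1 - ratOf p) : ℚ)⌋₊ = n := by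
      have h0 : (0 : ℝ) ≤ ((Int.fract (1 - ratOf p) : ℚ) : ℝ) := by
        exact_mod_cast Int.fract_nonneg _
      have h1 : ((Int.fract (1 - ratOf p) : ℚ) : ℝ) < 1 := by
        exact_mod_cast Int.fract_lt_one _
      rw [mul_div_cancel₀ _ hbR.ne', Nat.floor_eq_iff (by positivity)]
      constructor <;> linarith
    have := h _ hx
    simpa only [qDeltaFn, cycExponent, qdelta_eq_dvdCount hb0 _ (hs _) hx, qdelta_eq_dvdCount hb0 _ (hu _) hx,
      hfl] using this
  · intro h x hx
    obtain ⟨n, hn⟩ := hN b (by omega) (b * x) (by positivity)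
    have hrn (i : Fin v) := hn (.inl i)
    have htn (j : Fin w) := hn (.inr j)
    simp only [Sum.elim_inl, Sum.elim_inr] at hrn htn
    simpa only [qDeltaFn, cycExponent, qdelta_eq_dvdCount hb0 _ (hs _) hx, qdelta_eq_dvdCount hb0 _ (hu _) hx,
      hrn, htn] using h n

/-- A nonzero integral polynomial vanishes at only finitely many of the `exp (2πi / b)`. -/
theorem exists_forall_aeval_exp_ne_zero {C : ℤ[X]} (hC : C ≠ 0) :
    ∃ N : ℕ, ∀ b : ℕ, N ≤ b → aeval (Complex.exp (2 * Real.pi * Complex.I / b)) C ≠ 0 := by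
  have hfin : (C.rootSet ℂ).Finite := rootSet_finite C ℂ
  have hfin' : {b : ℕ | b ≠ 0 ∧ aeval (Complex.exp (2 * Real.pi * Complex.I / b)) C = 0}.Finite := by
    refine hfin.of_injOn (f := fun b : ℕ => Complex.exp (2 * Real.pi * Complex.I / b))
      (fun b hb => mem_rootSet.mpr ⟨hC, hb.2⟩) fun a ha b hb hab => ?_
    have h := Complex.isPrimitiveRoot_exp a ha.1
    simp only at hab
    rw [hab] at h
    exact h.unique (Complex.isPrimitiveRoot_exp b hb.1)
  obtain ⟨N, hN⟩ := hfin'.bddAbove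
  refine ⟨N + 1, fun b hb h => ?_⟩
  have := hN (show b ∈ _ from ⟨by omega, h⟩)
  omega

/-- Corollary 4.2: a first criterion for q-integrality. -/
theorem q_integrality_criterion {v w : ℕ} (rr : Fin v → ℤ × ℤ) (tt : Fin w → ℤ × ℤ)
    (hs : ∀ i, (rr i).2 ≠ 0) (hu : ∀ j, (tt j).2 ≠ 0)
    (ht : ∀ j, ¬ IsNonPosInt (ratOf (tt j))) (hr : ∀ i, ¬ IsNonPosInt (ratOf (rr i)))
    (hsum : 0 ≤ (∑ i ∈ Finset.univ.filter (fun i => (rr i).2 < 0), (rr i).2) -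
        (∑ j ∈ Finset.univ.filter (fun j => (tt j).2 < 0), (tt j).2)) :
    (∃ C : Polynomial ℤ, C ≠ 0 ∧ ∀ n : ℕ, IsIntPoly (polyZ C ^ n * qHyp rr tt n)) ↔
      (∃ N : ℕ, ∀ b : ℕ, N ≤ b → ∀ x : ℝ, 0 ≤ x → 0 ≤ qDeltaFn b rr tt x) := by
  obtain ⟨N₀, hN₀⟩ := exists_qDeltaFn_nonneg_iff rr tt hs hu
  constructor
  · rintro ⟨C, hC, hint⟩
    obtain ⟨N₁, hN₁⟩ := exists_forall_aeval_exp_ne_zero hC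
    refine ⟨N₀ + N₁ + 1, fun b hb => (hN₀ b (by omega)).mpr fun n => ?_⟩
    obtain ⟨B, hB, hform⟩ := exists_hasCyclotomicForm_qHyp hs hu ht hr n b
    refine hform.nonneg_of_isIntPoly (Finset.mem_Icc.mpr ⟨by omega, hB⟩)
      (Complex.isPrimitiveRoot_exp b (by omega)) (g := C ^ n) ?_ ?_
    · rw [map_pow]
      exact pow_ne_zero _ (hN₁ b (by omega))
    · simpa only [← polyZHom_apply, map_pow] using hint n
  · rintro ⟨N₁, hN₁⟩
    obtain ⟨M, hM⟩ := exists_neg_mul_le_qExponent rr tt hsum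
    set N := N₀ + N₁ with hN
    set C : ℤ[X] := X ^ M * ∏ d ∈ Finset.Icc 1 N, cyclotomic d ℤ ^ w with hCdef
    have hCform {B : ℕ} (hB : N ≤ B) :
        HasCyclotomicForm B (polyZ C) M (fun d => if d ≤ N then (w : ℤ) else 0) := by
      refine ⟨1, ?_⟩
      rw [← polyZHom_apply, hCdef, map_mul, map_pow, polyZHom_X, map_prod, Units.val_one, map_one,
        map_one, one_mul, zpow_natCast]
      congr 1
      refine Finset.prod_subset_one_on_sdiff (Finset.Icc_subset_Icc_right hB) (fun d hd => ?_)
        (fun d hd => ?_)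
      · rw [Finset.mem_sdiff, Finset.mem_Icc, Finset.mem_Icc] at hd
        have hd' : ¬ d ≤ N := by omega
        simp only [if_neg hd', zpow_zero]
      · simp only [if_pos (Finset.mem_Icc.mp hd).2, zpow_natCast, map_pow]
    refine ⟨C, ?_, fun n => ?_⟩
    · exact mul_ne_zero (pow_ne_zero _ X_ne_zero) (Finset.prod_ne_zero_iff.mpr fun d _ =>
        pow_ne_zero _ (cyclotomic_ne_zero d ℤ))
    · obtain ⟨B, hB, hform⟩ := exists_hasCyclotomicForm_qHyp hs hu ht hr n N
      refine (((hCform hB).pow n).mul hform).isIntPoly ?_ fun d _ => ?_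
      · linarith [hM n]
      · rw [Pi.add_apply, Pi.smul_apply, nsmul_eq_mul]
        split_ifs with hd
        · linarith [neg_le_cycExponent rr tt n d]
        · have := (hN₀ d (by omega)).mp (hN₁ d (by omega)) n
          simpa using this
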